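/- Given a nihil decomposition A = A₁ ⊕ A₀ in which A₁ is a subalgebra of A (closed under multiplication), and a function T : A → A written as T = T₁ + T₀ with T₁(A) ⊆ A₁ and T₀(A) ⊆ A₀: if T is a multiplier of A, then T₁ is a multiplier of A and T₀(x·y) = 0 for all x, y ∈ A. -/

import Mathlib

/-- A function `T : A → A` is a multiplier of `A` if
`x * T y = T (x * y) = T x * y` for all `x, y`. -/
def IsMultiplier {A : Type*} [Mul A] (T : A → A) : Prop :=
  ∀ x y : A, x * T y = T (x * y) ∧ T (x * y) = T x * y

/-!
Elements of the annihilator disappear from products. Hence, when `A₁` is closed under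
multiplication, every product of elements of `A = A₁ + A₀` already lies in `A₁`. In particular
`T (x * y) = x * T y ∈ A₁`, so its `A₀`-component `T₀ (x * y)` vanishes; and in the multiplier
identities for `T` the summand `T₀` then contributes nothing, which leaves those for `T₁`.
-/

/-- The two-sided annihilator `Ann_l(A) ∩ Ann_r(A)`, encoded as a set so that it makes sense
without distributivity. -/
def twoSidedAnnihilator (A : Type*) [Mul A] [Zero A] : Set A :=
  {a | (∀ x, a * x = 0) ∧ ∀ x, x * a = 0}

section Semiring

variable {A : Type*} [NonUnitalNonAssocSemiring A] {a : A}

theorem add_mul_of_mem_twoSidedAnnihilator (ha : a ∈ twoSidedAnnihilator A) (x y : A) :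
    (x + a) * y = x * y := by
  rw [add_mul, ha.1, add_zero]

theorem mul_add_of_mem_twoSidedAnnihilator (ha : a ∈ twoSidedAnnihilator A) (x y : A) :
    x * (y + a) = x * y := by
  rw [mul_add, ha.2, add_zero]

theorem IsMultiplier.of_eq_add_mem_twoSidedAnnihilator {T S Z : A → A}
    (hT : IsMultiplier T) (hsum : ∀ x, T x = S x + Z x) (hZ : ∀ x, Z x ∈ twoSidedAnnihilator A)
    (hZ_mul : ∀ x y, Z (x * y) = 0) : IsMultiplier S := by
  intro x y
  simpa only [hsum, mul_add_of_mem_twoSidedAnnihilator (hZ y),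
    add_mul_of_mem_twoSidedAnnihilator (hZ x), hZ_mul, add_zero] using hT x y

end Semiring

section Ring

variable {A : Type*} [NonUnitalNonAssocRing A] {A₁ A₀ : AddSubgroup A}

theorem mul_mem_of_codisjoint_of_subset_twoSidedAnnihilator
    (hA₀ : (A₀ : Set A) ⊆ twoSidedAnnihilator A) (hcodisj : Codisjoint A₁ A₀)
    (hmul : ∀ x ∈ A₁, ∀ y ∈ A₁, x * y ∈ A₁) (x y : A) : x * y ∈ A₁ := by
  have exists_add (z : A) : ∃ u ∈ A₁, ∃ v ∈ A₀, u + v = z :=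
    AddSubgroup.mem_sup.mp (hcodisj.eq_top ▸ AddSubgroup.mem_top z)
  obtain ⟨u, hu, a, ha, rfl⟩ := exists_add x
  obtain ⟨v, hv, b, hb, rfl⟩ := exists_add y
  rw [add_mul_of_mem_twoSidedAnnihilator (hA₀ ha), mul_add_of_mem_twoSidedAnnihilator (hA₀ hb)]
  exact hmul u hu v hv

theorem nihil_decomposition_multiplier_converse_general
    (hA₀ : (A₀ : Set A) ⊆ twoSidedAnnihilator A) (hcompl : IsCompl A₁ A₀)
    (hmul : ∀ x ∈ A₁, ∀ y ∈ A₁, x * y ∈ A₁) {T T₁ T₀ : A → A}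
    (hsum : ∀ x, T x = T₁ x + T₀ x) (h₁ : ∀ x, T₁ x ∈ A₁) (h₀ : ∀ x, T₀ x ∈ A₀)
    (hT : IsMultiplier T) : IsMultiplier T₁ ∧ ∀ x y, T₀ (x * y) = 0 := by
  have hT_mem (x y : A) : T (x * y) ∈ A₁ :=
    (hT x y).1 ▸ mul_mem_of_codisjoint_of_subset_twoSidedAnnihilator hA₀ hcompl.codisjoint hmul x _
  have hT₀_mul (x y : A) : T₀ (x * y) = 0 :=
    AddSubgroup.disjoint_def.mp hcompl.disjoint
      ((add_mem_cancel_left (h₁ _)).mp (hsum _ ▸ hT_mem x y)) (h₀ _)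
  exact ⟨hT.of_eq_add_mem_twoSidedAnnihilator hsum (fun x => hA₀ (h₀ x)) hT₀_mul, hT₀_mul⟩

end Ring

theorem isCompl_toAddSubgroup {R M : Type*} [Ring R] [AddCommGroup M] [Module R M]
    {p q : Submodule R M} (h : IsCompl p q) : IsCompl p.toAddSubgroup q.toAddSubgroup where
  disjoint := AddSubgroup.disjoint_def.mpr (Submodule.disjoint_def.mp h.disjoint _)
  codisjoint := codisjoint_iff.mpr <| by
    rw [← Submodule.sup_toAddSubgroup, h.sup_eq_top, Submodule.top_toAddSubgroup]

theorem nihil_decomposition_multiplier_converse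
    {K A : Type*} [Field K] [NonUnitalNonAssocRing A] [Module K A]
    [SMulCommClass K A A] [IsScalarTower K A A]
    (A₁ A₀ : Submodule K A)
    (hA₀ : (A₀ : Set A) = {a : A | (∀ x : A, a * x = 0) ∧ (∀ x : A, x * a = 0)})
    (hcompl : IsCompl A₁ A₀)
    (hmul : ∀ x ∈ A₁, ∀ y ∈ A₁, x * y ∈ A₁)
    (T T₁ T₀ : A → A)
    (hsum : ∀ x : A, T x = T₁ x + T₀ x)
    (h₁ : ∀ x : A, T₁ x ∈ A₁) (h₀ : ∀ x : A, T₀ x ∈ A₀)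
    (hT : IsMultiplier T) :
    IsMultiplier T₁ ∧ (∀ x y : A, T₀ (x * y) = 0) := by
  exact nihil_decomposition_multiplier_converse_general (A₁ := A₁.toAddSubgroup) hA₀.subset
    (isCompl_toAddSubgroup hcompl) hmul hsum h₁ h₀ hT
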